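/- arXiv:2210.12128 — 11 statements merged into one kernel-verified Lean document; each statement's English description precedes it below -/
import Mathlib

section
/- Fix integers m, n ≥ 2. Define vectors D_1, …, D_{mn} ∈ ℕ^{m+n-1}, with coordinates indexed by the symbols s_0, s_1, …, s_{m-1}, t_1, …, t_{n-2}, as follows: D_1 is the zero vector; for 1 ≤ i ≤ m-1, D_{1+i} has s_0-coordinate 0, s_a-coordinate equal to 1 if a ≤ i and 0 otherwise (for 1 ≤ a ≤ m-1), and t_b-coordinate equal to i (for 1 ≤ b ≤ n-2); for 1 ≤ j ≤ n-1, D_{m+j} has s_a-coordinate 1 for every 0 ≤ a ≤ m-1 and t_b-coordinate equal to (m-1) + 1 if b ≤ j-1 and (m-1) otherwise (for 1 ≤ b ≤ n-2); and for 1 ≤ i ≤ m-1, 1 ≤ j ≤ n-1, D_{m+n-1+(i-1)(n-1)+j} = D_{1+i} + D_{m+j}. Then for every coordinate u and all indices 1 ≤ k ≤ k' ≤ mn, the u-th coordinate of D_k is at most the u-th coordinate of D_{k'}. -/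
/-- The `s_a`-coordinate (for `0 ≤ a ≤ m-1`) of the degree vector `D_k`
(`1 ≤ k ≤ m*n`) arising from the variable substitution. -/
def Ds (m n k a : ℕ) : ℕ :=
  if k ≤ 1 then 0
  else if k ≤ m then (if 1 ≤ a ∧ a ≤ k - 1 then 1 else 0)
  else if k ≤ m + n - 1 then 1
  else (if 1 ≤ a ∧ a ≤ (k - m - n) / (n - 1) + 1 then 1 else 0) + 1

/-- The `t_b`-coordinate (for `1 ≤ b ≤ n-2`) of the degree vector `D_k`
(`1 ≤ k ≤ m*n`) arising from the variable substitution. -/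
def Dt (m n k b : ℕ) : ℕ :=
  if k ≤ 1 then 0
  else if k ≤ m then k - 1
  else if k ≤ m + n - 1 then (if b ≤ k - m - 1 then m else m - 1)
  else ((k - m - n) / (n - 1) + 1) + (if b ≤ (k - m - n) % (n - 1) then m else m - 1)

/-- Proposition 2.1: the exponent of each variable `s_0, …, s_{m-1}, t_1, …, t_{n-2}`
is nondecreasing along the list `1, x_1, …, x_{m-1}, y_1, …, y_{n-1}, x_1y_1, …, x_{m-1}y_{n-1}`. -/
theorem degree_vectors_monotone (m n : ℕ) (hm : 2 ≤ m) (hn : 2 ≤ n)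
    (k k' : ℕ) (hk : 1 ≤ k) (hkk' : k ≤ k') (hk' : k' ≤ m * n) :
    (∀ a : ℕ, a ≤ m - 1 → Ds m n k a ≤ Ds m n k' a) ∧
    (∀ b : ℕ, 1 ≤ b → b ≤ n - 2 → Dt m n k b ≤ Dt m n k' b) := by
  have hq : (k - m - n) / (n - 1) ≤ (k' - m - n) / (n - 1) :=
    Nat.div_le_div_right (by omega)
  have e := Nat.div_add_mod (k - m - n) (n - 1)
  have e' := Nat.div_add_mod (k' - m - n) (n - 1)
  have hle : k - m - n ≤ k' - m - n := by omega
  have hr : (k - m - n) / (n - 1) = (k' - m - n) / (n - 1) →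
      (k - m - n) % (n - 1) ≤ (k' - m - n) % (n - 1) := by
    intro h
    rw [h] at e
    omega
  clear e e' hk'
  unfold Ds Dt
  generalize (k - m - n) / (n - 1) = q at *
  generalize (k' - m - n) / (n - 1) = q' at *
  generalize (k - m - n) % (n - 1) = r at *
  generalize (k' - m - n) % (n - 1) = r' at *
  constructor
  · intro a ha
    split_ifs <;> omega
  · intro b hb hb'
    split_ifs <;> omega
end

section
/- Let A be a d × K matrix with nonnegative integer entries such that every standard basis vector e_1, …, e_d of ℕ^d appears as a column of A and every column of A is nonzero. Then for all vectors a, b ∈ ℕ^d with b_i ≤ a_i for every 1 ≤ i ≤ d, the number of x ∈ ℕ^K with A x = b is at most the number of x ∈ ℕ^K with A x = a. (Both solution sets are finite under these hypotheses.) -/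
/-- Lemma 4.1 (dominance): for a matrix `A` with nonnegative integer entries whose columns
include every standard basis vector and are all nonzero, if `b ≤ a` coordinatewise then
`p_A(b) ≤ p_A(a)`. -/
theorem vpf_dominance (d K : ℕ) (A : Matrix (Fin d) (Fin K) ℕ)
    (hbasis : ∀ i : Fin d, ∃ j : Fin K, (fun i' => A i' j) = Pi.single i 1)
    (hcol : ∀ j : Fin K, ∃ i : Fin d, A i j ≠ 0)
    (a b : Fin d → ℕ) (hba : ∀ i, b i ≤ a i) :
    Nat.card {x : Fin K → ℕ // A.mulVec x = b} ≤
      Nat.card {x : Fin K → ℕ // A.mulVec x = a} := by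
  choose σ hσ using hbasis
  have hfin : Finite {x : Fin K → ℕ // A.mulVec x = a} := by
    choose τ hτ using hcol
    refine Set.Finite.to_subtype (Set.Finite.subset (Set.finite_Iic (fun j => a (τ j))) ?_)
    intro x hx j
    have hx' : A.mulVec x = a := hx
    have h1 : A (τ j) j * x j ≤ ∑ k, A (τ j) k * x k :=
      Finset.single_le_sum (f := fun k => A (τ j) k * x k) (fun _ _ => Nat.zero_le _)
        (Finset.mem_univ j)
    have h2 : ∑ k, A (τ j) k * x k = a (τ j) := congrFun hx' (τ j)
    have h3 : x j ≤ A (τ j) j * x j := Nat.le_mul_of_pos_left _ (Nat.pos_of_ne_zero (hτ j))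
    show x j ≤ a (τ j)
    omega
  have hy : A.mulVec (∑ i, Pi.single (σ i) (a i - b i)) = fun i => a i - b i := by
    rw [Matrix.mulVec_sum]
    funext i'
    rw [Finset.sum_apply]
    have h : ∀ i, A.mulVec (Pi.single (σ i) (a i - b i)) i'
        = if i' = i then a i - b i else 0 := by
      intro i
      have h4 : A i' (σ i) = (Pi.single i 1 : Fin d → ℕ) i' := congrFun (hσ i) i'
      rw [Matrix.mulVec, dotProduct_single, h4, Pi.single_apply]
      split_ifs <;> simp
    simp [h]
  refine Nat.card_le_card_of_injective
    (fun x => ⟨x.1 + ∑ i, Pi.single (σ i) (a i - b i), ?_⟩) ?_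
  · rw [Matrix.mulVec_add, x.2, hy]
    funext i
    have := hba i
    show b i + (a i - b i) = a i
    omega
  · intro x y h
    have h5 := congrArg Subtype.val h
    exact Subtype.ext (add_right_cancel h5)
end

section
/- Let A be a d × K matrix with nonnegative integer entries such that every standard basis vector e_1, …, e_d appears as a column of A and every column of A is nonzero. Let c ∈ ℤ^d and let v₁, v₂ ∈ ℤ^d satisfy v₂_i ≤ v₁_i for every 1 ≤ i ≤ d. Then the number of x ∈ ℕ^K with A x = c − v₁ is at most the number of x ∈ ℕ^K with A x = c − v₂. -/
/-- Lemma 4.2: if `v₂ ≤ v₁` coordinatewise, then `p_A(c - v₁) ≤ p_A(c - v₂)`, for a matrix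
`A` with nonnegative integer entries whose columns include every standard basis vector and
are all nonzero. -/
theorem vpf_shift_dominance (d K : ℕ) (A : Matrix (Fin d) (Fin K) ℤ)
    (hA : ∀ i j, 0 ≤ A i j)
    (hbasis : ∀ i : Fin d, ∃ j : Fin K, (fun i' => A i' j) = Pi.single i 1)
    (hcol : ∀ j : Fin K, ∃ i : Fin d, A i j ≠ 0)
    (c v₁ v₂ : Fin d → ℤ) (hv : ∀ i, v₂ i ≤ v₁ i) :
    Nat.card {x : Fin K → ℕ // A.mulVec (fun j => (x j : ℤ)) = c - v₁} ≤
      Nat.card {x : Fin K → ℕ // A.mulVec (fun j => (x j : ℤ)) = c - v₂} := by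
  choose σ hσ using hbasis
  choose τ hτ using hcol
  have hfin : Finite {x : Fin K → ℕ // A.mulVec (fun j => (x j : ℤ)) = c - v₂} := by
    apply Set.Finite.to_subtype
    apply (Set.finite_Iic (fun j : Fin K => ((c - v₂) (τ j)).toNat)).subset
    intro x hx j
    have hx' : A.mulVec (fun j => (x j : ℤ)) = c - v₂ := hx
    have h1 : A (τ j) j * (x j : ℤ) ≤ ∑ k, A (τ j) k * (x k : ℤ) :=
      Finset.single_le_sum (f := fun k => A (τ j) k * (x k : ℤ))
        (fun k _ => mul_nonneg (hA _ _) (Int.natCast_nonneg _)) (Finset.mem_univ j)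
    have h2 : ∑ k, A (τ j) k * (x k : ℤ) = (c - v₂) (τ j) := congrFun hx' (τ j)
    have h3 : 1 ≤ A (τ j) j := by
      have := hA (τ j) j
      have := hτ j
      omega
    have h4 : (x j : ℤ) ≤ A (τ j) j * (x j : ℤ) :=
      le_mul_of_one_le_left (Int.natCast_nonneg _) h3
    change x j ≤ ((c - v₂) (τ j)).toNat
    omega
  let w : Fin K → ℕ := fun j => ∑ i, if j = σ i then (v₁ i - v₂ i).toNat else 0
  have hw : A.mulVec (fun j => (w j : ℤ)) = v₁ - v₂ := by
    ext i
    have hσ' : ∀ k, A i (σ k) = if i = k then 1 else 0 := by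
      intro k
      have := congrFun (hσ k) i
      simpa [Pi.single_apply] using this
    have hn : ((v₁ i - v₂ i).toNat : ℤ) = v₁ i - v₂ i :=
      Int.toNat_of_nonneg (sub_nonneg.2 (hv i))
    simp only [Matrix.mulVec, dotProduct, w, Nat.cast_sum, Finset.mul_sum]
    rw [Finset.sum_comm]
    simp only [Nat.cast_ite, Nat.cast_zero, mul_ite, mul_zero, Finset.sum_ite_eq',
      Finset.mem_univ, if_true, hσ', ite_mul, one_mul, zero_mul, Finset.sum_ite_eq, hn,
      Pi.sub_apply]
  refine Nat.card_le_card_of_injective (fun x => ⟨fun j => x.1 j + w j, ?_⟩) ?_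
  · have h : (fun j => ((x.1 j + w j : ℕ) : ℤ)) =
        (fun j => (x.1 j : ℤ)) + fun j => (w j : ℤ) := by
      ext j
      simp
    rw [h, Matrix.mulVec_add, hw, x.2]
    abel
  · intro x y hxy
    ext j
    have := congrFun (Subtype.ext_iff.1 hxy) j
    simpa using this
end

section
/- For all integers m ≥ 1, n ≥ 3, and v with 1 ≤ v ≤ n−2, the following identity holds in ℚ: (1/12)(8n²m² − 6vnm + 5n²m − 10nm² + 6v² − 12vn + 6vm − 19nm + 2m² + 18v + 14m)(m − 1) + C(m, 3) + (m−1)·C(n−1, 2) + C(n−v−1, 2) = Σ_{i=2}^{m} (i−1)(mn − i) + (m−1)·Σ_{i=m+1}^{m+v} (mn − i) + m·Σ_{i=m+v+1}^{m+n−1} (mn − i) + Σ_{i=1}^{m−1} Σ_{j=1}^{v} (i + m − 1)(mn − m − i(n−1) − j) + Σ_{i=1}^{m−1} Σ_{j=v+1}^{n−1} (i + m)(mn − m − i(n−1) − j). Here C(a,k) denotes a binomial coefficient. -/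
open Finset

lemma aux_lin (x : ℚ) (a k : ℕ) : ∑ i ∈ Finset.Icc (a + 1) (a + k), (x - (i : ℚ))
    = k * x - k * a - k * (k + 1) / 2 := by
  induction k with
  | zero => simp
  | succ k ih =>
    rw [← add_assoc, Finset.sum_Icc_succ_top (by omega), ih]
    push_cast
    ring

lemma aux_first (x : ℚ) (a : ℕ) : ∑ i ∈ Finset.Icc 2 (a + 1), ((i : ℚ) - 1) * (x - (i : ℚ))
    = (x - 1) * (a * (a + 1) / 2) - a * (a + 1) * (2 * a + 1) / 6 := by
  induction a with
  | zero => simp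
  | succ k ih =>
    rw [Finset.sum_Icc_succ_top (by omega), ih]
    push_cast
    ring

lemma aux_quad (p q r : ℚ) (a : ℕ) : ∑ i ∈ Finset.Icc 1 a, ((i : ℚ) + p) * (q - (i : ℚ) * r)
    = a * (p * q) + (q - p * r) * (a * (a + 1) / 2) - r * (a * (a + 1) * (2 * a + 1) / 6) := by
  induction a with
  | zero => simp
  | succ k ih =>
    rw [Finset.sum_Icc_succ_top (by omega), ih]
    push_cast
    ring

lemma aux_choose (a : ℕ) : (Nat.choose (a + 1) 3 : ℚ) = (a + 1) * a * (a - 1) / 6 := by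
  induction a with
  | zero => simp [Nat.choose]
  | succ k ih =>
    rw [Nat.choose_succ_succ' (k + 1) 2]
    push_cast
    rw [ih, Nat.cast_choose_two]
    push_cast
    ring

/-- The constant term of each `t`-coordinate of the vector partition function input
`b^{m,n}(λ,μ,ν; Id)` vanishes: `β_v + C(m,3) + (m-1)C(n-1,2) + C(n-v-1,2)` equals the
weighted sum of staircase entries `δ_i = mn - i` over the index ranges of `l_t(λ; Id)_v`. -/
theorem t_constant_terms_vanish (m n v : ℕ) (hm : 1 ≤ m) (hn : 3 ≤ n)
    (hv1 : 1 ≤ v) (hv2 : v ≤ n - 2) :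
    ((1 : ℚ) / 12) * (8 * (n : ℚ) ^ 2 * (m : ℚ) ^ 2 - 6 * v * n * m
          + 5 * (n : ℚ) ^ 2 * m - 10 * n * (m : ℚ) ^ 2 + 6 * (v : ℚ) ^ 2
          - 12 * v * n + 6 * v * m - 19 * n * m + 2 * (m : ℚ) ^ 2
          + 18 * v + 14 * m) * ((m : ℚ) - 1)
        + (Nat.choose m 3 : ℚ) + ((m : ℚ) - 1) * (Nat.choose (n - 1) 2 : ℚ)
        + (Nat.choose (n - v - 1) 2 : ℚ)
      = ∑ i ∈ Finset.Icc 2 m, ((i : ℚ) - 1) * (((m * n : ℕ) : ℚ) - (i : ℚ))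
        + ((m : ℚ) - 1) * ∑ i ∈ Finset.Icc (m + 1) (m + v), (((m * n : ℕ) : ℚ) - (i : ℚ))
        + (m : ℚ) * ∑ i ∈ Finset.Icc (m + v + 1) (m + n - 1), (((m * n : ℕ) : ℚ) - (i : ℚ))
        + ∑ i ∈ Finset.Icc 1 (m - 1), ∑ j ∈ Finset.Icc 1 v,
            ((i : ℚ) + m - 1) * (((m * n : ℕ) : ℚ) - m - i * ((n : ℚ) - 1) - j)
        + ∑ i ∈ Finset.Icc 1 (m - 1), ∑ j ∈ Finset.Icc (v + 1) (n - 1),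
            ((i : ℚ) + m) * (((m * n : ℕ) : ℚ) - m - i * ((n : ℚ) - 1) - j) := by
  obtain ⟨a, rfl⟩ : ∃ a, m = a + 1 := ⟨m - 1, by omega⟩
  obtain ⟨w, rfl⟩ : ∃ w, n = v + (w + 1) + 1 := ⟨n - v - 2, by omega⟩
  have e1 : v + (w + 1) + 1 - 1 = v + (w + 1) := by omega
  have e2 : v + (w + 1) + 1 - v - 1 = w + 1 := by omega
  have e3 : a + 1 + (v + (w + 1) + 1) - 1 = a + 1 + v + (w + 1) := by omega
  have e4 : a + 1 - 1 = a := by omega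
  rw [e1, e2, e3, e4, aux_lin, aux_lin, aux_first, aux_choose, Nat.cast_choose_two,
    Nat.cast_choose_two]
  generalize hx : (((a + 1) * (v + (w + 1) + 1) : ℕ) : ℚ) = x
  have h1 := fun y : ℚ => aux_lin y 0 v
  simp only [zero_add] at h1
  simp only [← Finset.mul_sum, h1, aux_lin]
  have s1 := aux_quad (((a + 1 : ℕ) : ℚ) - 1)
    (v * (x - ((a + 1 : ℕ) : ℚ)) - v * (v + 1) / 2) (v * (((v + (w + 1) + 1 : ℕ) : ℚ) - 1)) a
  have s2 := aux_quad (((a + 1 : ℕ) : ℚ))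
    ((w + 1) * (x - ((a + 1 : ℕ) : ℚ)) - (w + 1) * v - (w + 1) * (w + 2) / 2)
    ((w + 1) * (((v + (w + 1) + 1 : ℕ) : ℚ) - 1)) a
  refine Eq.trans ?_ (congrArg₂ (fun y z : ℚ => _ + y + z)
    (Eq.trans s1.symm (Finset.sum_congr rfl fun i _ => by push_cast; ring))
    (Eq.trans s2.symm (Finset.sum_congr rfl fun i _ => by push_cast; ring)))
  rw [← hx]
  push_cast
  ring
end

section
/- Let m, n be positive integers and let λ, μ, ν be partitions of the same positive integer N with at most mn, m, n parts respectively (padded with zeros, so λ = (λ_1 ≥ … ≥ λ_{mn} ≥ 0), μ = (μ_1 ≥ … ≥ μ_m ≥ 0), ν = (ν_1 ≥ … ≥ ν_n ≥ 0) and Σλ_i = Σμ_i = Σν_j = N). Then the following system of m + n − 2 equations holds: (i) Σ_{j=2}^{n} ν_j = Σ_{i=m+1}^{mn} λ_i; (ii) for every u with 1 ≤ u ≤ m−1: Σ_{i=u+1}^{m} μ_i + Σ_{j=2}^{n} ν_j = Σ_{i=u+1}^{m+u(n−1)} λ_i + 2·Σ_{i=m+u(n−1)+1}^{mn} λ_i;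 (iii) for every v with 1 ≤ v ≤ n−2: Σ_{i=2}^{m} (i−1)μ_i + (m−1)·Σ_{j=2}^{v+1} ν_j + m·Σ_{j=v+2}^{n} ν_j = Σ_{i=2}^{m} (i−1)λ_i + (m−1)·Σ_{i=m+1}^{m+v} λ_i + m·Σ_{i=m+v+1}^{m+n−1} λ_i + Σ_{i=1}^{m−1} Σ_{j=1}^{v} (i+m−1)·λ_{m+i(n−1)+j} + Σ_{i=1}^{m−1} Σ_{j=v+1}^{n−1} (i+m)·λ_{m+i(n−1)+j}; if and only if: μ_u = λ_u + Σ_{i=m+(u−1)(n−1)+1}^{m+u(n−1)} λ_i for every 1 ≤ u ≤ m, ν_1 = Σ_{i=1}^{m} λ_i, and ν_v = Σ_{i=0}^{m−1} λ_{m+(n−1)i+v−1} for every 2 ≤ v ≤ n. -/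
open Finset


theorem aux_conv (f : ℕ → ℕ) (a b : ℕ) :
    ∑ i ∈ Finset.Icc (a + 1) b, f i = ∑ i ∈ Finset.Ico a b, f (i + 1) := by
  rw [Finset.sum_Ico_add' f a b 1]
  rfl

theorem aux_conv2 (f : ℕ → ℕ) (a b : ℕ) :
    ∑ i ∈ Finset.Icc (a + 2) (b + 1), f i = ∑ i ∈ Finset.Ico a b, f (i + 2) := by
  rw [Finset.sum_Ico_add' f a b 2]
  rfl

theorem aux_rows (f : ℕ → ℕ) (m k u w : ℕ) (h : u ≤ w) :
    ∑ i ∈ Finset.Icc (m + u * k + 1) (m + w * k), f i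
      = ∑ i ∈ Finset.Ico u w, ∑ j ∈ Finset.range k, f (m + i * k + j + 1) := by
  rw [aux_conv]
  induction w, h using Nat.le_induction with
  | base => simp
  | succ w hw ih =>
    rw [Finset.sum_Ico_succ_top hw, ← ih,
      ← Finset.sum_Ico_consecutive _ (show m + u * k ≤ m + w * k by gcongr)
        (show m + w * k ≤ m + (w + 1) * k by gcongr; omega)]
    congr 1
    rw [Finset.sum_Ico_eq_sum_range]
    have : m + (w + 1) * k - (m + w * k) = k := by
      rw [add_mul]; omega
    rw [this]

theorem aux_tail (f g : ℕ → ℕ) (m : ℕ)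
    (h : ∀ u, u < m → ∑ i ∈ Finset.Ico u m, f i = ∑ i ∈ Finset.Ico u m, g i) :
    ∀ u, u < m → f u = g u := by
  intro u hu
  have h1 := h u hu
  rw [Finset.sum_eq_sum_Ico_succ_bot hu, Finset.sum_eq_sum_Ico_succ_bot hu] at h1
  rcases Nat.lt_or_ge (u + 1) m with h2 | h2
  · have := h (u + 1) h2
    omega
  · rw [Finset.Ico_eq_empty_of_le h2] at h1
    simpa using h1

/-- right-hand side of (iii), normalized -/
theorem aux_rhs (B : ℕ → ℕ → ℕ) (p k v : ℕ) (hv : v ≤ k) :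
    p * ∑ j ∈ Finset.Ico 0 v, B 0 j + (p + 1) * ∑ j ∈ Finset.Ico v k, B 0 j
     + ∑ i ∈ Finset.Ico 0 p, ∑ j ∈ Finset.Ico 0 v, (i + 1 + p) * B (i + 1) j
     + ∑ i ∈ Finset.Ico 0 p, ∑ j ∈ Finset.Ico v k, (i + 1 + (p + 1)) * B (i + 1) j
    = ∑ i ∈ Finset.Ico 0 (p + 1), i * ∑ j ∈ Finset.range k, B i j
     + p * ∑ i ∈ Finset.Ico 0 (p + 1), ∑ j ∈ Finset.range k, B i j
     + ∑ j ∈ Finset.Ico v k, ∑ i ∈ Finset.range (p + 1), B i j := by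
  have hk : ∀ i, ∑ j ∈ Finset.range k, B i j
      = ∑ j ∈ Finset.Ico 0 v, B i j + ∑ j ∈ Finset.Ico v k, B i j := by
    intro i
    rw [Finset.sum_Ico_consecutive _ (Nat.zero_le v) hv, Finset.range_eq_Ico]
  rw [Finset.sum_comm (s := Finset.Ico v k) (t := Finset.range (p + 1))]
  simp only [hk, ← Finset.mul_sum, ← Finset.range_eq_Ico, Finset.sum_range_succ' _ p]
  simp only [Finset.sum_add_distrib, mul_add, add_mul, ← Finset.mul_sum]
  ring

/-- Proposition 5.2: for partitions `λ, μ, ν` of the same positive integer `N` with at most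
`mn, m, n` parts (indexed here from 1, padded with zeros), the system of `m + n - 2` equations
`b^{m,n}(λ,μ,ν; Id) = 0` holds if and only if each part of `μ` and `ν` is the indicated sum of
parts of `λ`. -/
theorem stability_system_equiv (m n N : ℕ) (hm : 1 ≤ m) (hn : 1 ≤ n) (hN : 0 < N)
    (lam mu nu : ℕ → ℕ)
    (hlam : ∀ i, 1 ≤ i → i < m * n → lam (i + 1) ≤ lam i)
    (hmu : ∀ i, 1 ≤ i → i < m → mu (i + 1) ≤ mu i)
    (hnu : ∀ j, 1 ≤ j → j < n → nu (j + 1) ≤ nu j)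
    (hlamN : ∑ i ∈ Finset.Icc 1 (m * n), lam i = N)
    (hmuN : ∑ i ∈ Finset.Icc 1 m, mu i = N)
    (hnuN : ∑ j ∈ Finset.Icc 1 n, nu j = N) :
    ((∑ j ∈ Finset.Icc 2 n, nu j = ∑ i ∈ Finset.Icc (m + 1) (m * n), lam i) ∧
     (∀ u, 1 ≤ u → u ≤ m - 1 →
        ∑ i ∈ Finset.Icc (u + 1) m, mu i + ∑ j ∈ Finset.Icc 2 n, nu j
          = ∑ i ∈ Finset.Icc (u + 1) (m + u * (n - 1)), lam i
            + 2 * ∑ i ∈ Finset.Icc (m + u * (n - 1) + 1) (m * n), lam i) ∧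
     (∀ v, 1 ≤ v → v ≤ n - 2 →
        ∑ i ∈ Finset.Icc 2 m, (i - 1) * mu i
            + (m - 1) * ∑ j ∈ Finset.Icc 2 (v + 1), nu j
            + m * ∑ j ∈ Finset.Icc (v + 2) n, nu j
          = ∑ i ∈ Finset.Icc 2 m, (i - 1) * lam i
            + (m - 1) * ∑ i ∈ Finset.Icc (m + 1) (m + v), lam i
            + m * ∑ i ∈ Finset.Icc (m + v + 1) (m + n - 1), lam i
            + ∑ i ∈ Finset.Icc 1 (m - 1), ∑ j ∈ Finset.Icc 1 v,
                (i + m - 1) * lam (m + i * (n - 1) + j)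
            + ∑ i ∈ Finset.Icc 1 (m - 1), ∑ j ∈ Finset.Icc (v + 1) (n - 1),
                (i + m) * lam (m + i * (n - 1) + j)))
    ↔ ((∀ u, 1 ≤ u → u ≤ m →
          mu u = lam u + ∑ i ∈ Finset.Icc (m + (u - 1) * (n - 1) + 1) (m + u * (n - 1)), lam i) ∧
       (nu 1 = ∑ i ∈ Finset.Icc 1 m, lam i) ∧
       (∀ v, 2 ≤ v → v ≤ n →
          nu v = ∑ i ∈ Finset.range m, lam (m + (n - 1) * i + v - 1))) := by
  obtain ⟨p, rfl⟩ : ∃ p, m = p + 1 := ⟨m - 1, by omega⟩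
  obtain ⟨k, rfl⟩ : ∃ k, n = k + 1 := ⟨n - 1, by omega⟩
  have hmn : (p + 1) * (k + 1) = (p + 1) + (p + 1) * k := by ring
  simp only [hmn, Nat.add_sub_cancel] at *
  clear hlam hmu hnu hN hm hn
  set R : ℕ → ℕ := fun i => ∑ j ∈ Finset.range k, lam (p + 1 + i * k + j + 1) with hR
  set C : ℕ → ℕ := fun j => ∑ i ∈ Finset.range (p + 1), lam (p + 1 + i * k + j + 1) with hC
  have hrow : ∀ u w, u ≤ w → ∑ i ∈ Finset.Icc (p + 1 + u * k + 1) (p + 1 + w * k), lam i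
      = ∑ i ∈ Finset.Ico u w, R i := fun u w h => aux_rows lam (p + 1) k u w h
  have hall : ∑ i ∈ Finset.Icc (p + 1 + 1) (p + 1 + (p + 1) * k), lam i
      = ∑ i ∈ Finset.Ico 0 (p + 1), R i := by
    have := hrow 0 (p + 1) (Nat.zero_le _)
    simpa using this
  have hCR : ∑ j ∈ Finset.Ico 0 k, C j = ∑ i ∈ Finset.Ico 0 (p + 1), R i := by
    simp only [hR, hC, ← Finset.range_eq_Ico]
    exact Finset.sum_comm
  have hN1 : ∑ i ∈ Finset.Ico 0 (p + 1), lam (i + 1) + ∑ i ∈ Finset.Ico 0 (p + 1), R i = N := by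
    rw [← hlamN, ← hall, aux_conv, aux_conv lam 0,
      Finset.sum_Ico_consecutive _ (Nat.zero_le _) (Nat.le_add_right _ _)]
  have hN2 : ∑ i ∈ Finset.Ico 0 (p + 1), mu (i + 1) = N := by
    rw [← hmuN, aux_conv mu 0]
  have hY : ∑ j ∈ Finset.Icc 2 (k + 1), nu j = ∑ j ∈ Finset.Ico 0 k, nu (j + 2) :=
    aux_conv2 nu 0 k
  have hN3 : nu 1 + ∑ j ∈ Finset.Ico 0 k, nu (j + 2) = N := by
    rw [← hnuN, aux_conv nu 0, Finset.sum_eq_sum_Ico_succ_bot (Nat.succ_pos k),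
      Finset.sum_Ico_add' (fun j => nu (j + 1)) 0 k 1]
  have hA1 : ∑ i ∈ Finset.Icc 1 (p + 1), lam i = ∑ i ∈ Finset.Ico 0 (p + 1), lam (i + 1) :=
    aux_conv lam 0 _
  -- equation (ii)
  have hii : ∀ u, u ≤ p →
      ∑ i ∈ Finset.Icc (u + 1) (p + 1 + u * k), lam i
        + 2 * ∑ i ∈ Finset.Icc (p + 1 + u * k + 1) (p + 1 + (p + 1) * k), lam i
      = ∑ i ∈ Finset.Ico u (p + 1), (lam (i + 1) + R i) + ∑ i ∈ Finset.Ico 0 (p + 1), R i := by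
    intro u hu
    have h1 := hrow u (p + 1) (by omega)
    have h2 := hrow 0 u (by omega)
    simp only [zero_mul, add_zero] at h2
    rw [aux_conv] at h2
    rw [h1, aux_conv, ← Finset.sum_Ico_consecutive _ (show u ≤ p + 1 by omega)
      (show p + 1 ≤ p + 1 + u * k by omega), h2, Finset.sum_add_distrib,
      ← Finset.sum_Ico_consecutive R (Nat.zero_le u) (show u ≤ p + 1 by omega)]
    ring
  have hw : ∀ f : ℕ → ℕ, ∑ i ∈ Finset.Icc 2 (p + 1), (i - 1) * f i
      = ∑ i ∈ Finset.Ico 0 (p + 1), i * f (i + 1) := by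
    intro f
    rw [aux_conv _ 1, Finset.sum_eq_sum_Ico_succ_bot (Nat.succ_pos p)]
    simp
  -- equation (iii)
  have hiii : ∀ v, v ≤ k →
      ∑ i ∈ Finset.Icc 2 (p + 1), (i - 1) * lam i
            + p * ∑ i ∈ Finset.Icc (p + 1 + 1) (p + 1 + v), lam i
            + (p + 1) * ∑ i ∈ Finset.Icc (p + 1 + v + 1) (p + 1 + (k + 1) - 1), lam i
            + ∑ i ∈ Finset.Icc 1 p, ∑ j ∈ Finset.Icc 1 v,
                (i + (p + 1) - 1) * lam (p + 1 + i * k + j)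
            + ∑ i ∈ Finset.Icc 1 p, ∑ j ∈ Finset.Icc (v + 1) k,
                (i + (p + 1)) * lam (p + 1 + i * k + j)
      = ∑ i ∈ Finset.Ico 0 (p + 1), i * (lam (i + 1) + R i)
        + p * ∑ i ∈ Finset.Ico 0 (p + 1), R i + ∑ j ∈ Finset.Ico v k, C j := by
    intro v hv
    have h := aux_rhs (fun i j => lam (p + 1 + i * k + j + 1)) p k v hv
    have e1 : ∑ i ∈ Finset.Icc (p + 1 + 1) (p + 1 + v), lam i
        = ∑ j ∈ Finset.Ico 0 v, lam (p + 1 + 0 * k + j + 1) := by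
      rw [aux_conv, Finset.sum_Ico_eq_sum_range, Finset.range_eq_Ico]
      simp
    have e2 : ∑ i ∈ Finset.Icc (p + 1 + v + 1) (p + 1 + (k + 1) - 1), lam i
        = ∑ j ∈ Finset.Ico v k, lam (p + 1 + 0 * k + j + 1) := by
      rw [aux_conv, Finset.sum_Ico_eq_sum_range, Finset.sum_Ico_eq_sum_range,
        show p + 1 + (k + 1) - 1 - (p + 1 + v) = k - v by omega]
      simp [add_assoc]
    have e3 : ∑ i ∈ Finset.Icc 1 p, ∑ j ∈ Finset.Icc 1 v,
                (i + (p + 1) - 1) * lam (p + 1 + i * k + j)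
        = ∑ i ∈ Finset.Ico 0 p, ∑ j ∈ Finset.Ico 0 v,
            (i + 1 + p) * lam (p + 1 + (i + 1) * k + j + 1) := by
      rw [aux_conv _ 0]
      refine Finset.sum_congr rfl fun i _ => ?_
      rw [aux_conv _ 0]
      rfl
    have e4 : ∑ i ∈ Finset.Icc 1 p, ∑ j ∈ Finset.Icc (v + 1) k,
                (i + (p + 1)) * lam (p + 1 + i * k + j)
        = ∑ i ∈ Finset.Ico 0 p, ∑ j ∈ Finset.Ico v k,
            (i + 1 + (p + 1)) * lam (p + 1 + (i + 1) * k + j + 1) := by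
      rw [aux_conv _ 0]
      refine Finset.sum_congr rfl fun i _ => ?_
      rw [aux_conv _ v]
      rfl
    rw [e1, e2, e3, e4, hw]
    simp only [mul_add, Finset.sum_add_distrib, hR, hC] at h ⊢
    linarith
  have hl3 : ∀ v, v ≤ k → p * ∑ j ∈ Finset.Icc 2 (v + 1), nu j
            + (p + 1) * ∑ j ∈ Finset.Icc (v + 2) (k + 1), nu j
      = p * ∑ j ∈ Finset.Ico 0 k, nu (j + 2) + ∑ j ∈ Finset.Ico v k, nu (j + 2) := by
    intro v hv
    rw [aux_conv2 nu 0 v, aux_conv2 nu v k,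
      ← Finset.sum_Ico_consecutive _ (Nat.zero_le v) hv]
    ring
  rw [hY, hall, hA1]
  constructor
  · rintro ⟨h1, h2, h3⟩
    have hx : ∀ u, u < p + 1 → mu (u + 1) = lam (u + 1) + R u := by
      refine aux_tail (fun i => mu (i + 1)) (fun i => lam (i + 1) + R i) (p + 1) ?_
      intro u hu
      rcases Nat.eq_zero_or_pos u with rfl | hu0
      · rw [Finset.sum_add_distrib]
        omega
      · have := h2 u hu0 (by omega)
        rw [hii u (by omega), aux_conv] at this
        omega
    have hy : ∀ v, v < k → nu (v + 2) = C v := by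
      refine aux_tail (fun j => nu (j + 2)) C k ?_
      intro v hv
      rcases Nat.eq_zero_or_pos v with rfl | hv0
      · omega
      · have := h3 v hv0 (by omega)
        rw [hiii v (by omega), add_assoc, hl3 v (by omega), hw] at this
        have hs : ∑ i ∈ Finset.Ico 0 (p + 1), i * mu (i + 1)
            = ∑ i ∈ Finset.Ico 0 (p + 1), i * (lam (i + 1) + R i) :=
          Finset.sum_congr rfl fun i hi => by rw [hx i (Finset.mem_Ico.1 hi).2]
        rw [hs, h1] at this
        omega
    refine ⟨?_, by omega, ?_⟩
    · intro u hu1 hu2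
      obtain ⟨w, rfl⟩ : ∃ w, u = w + 1 := ⟨u - 1, by omega⟩
      rw [hx w (by omega), Nat.add_sub_cancel, hrow w (w + 1) (by omega)]
      simp
    · intro v hv1 hv2
      obtain ⟨w, rfl⟩ : ∃ w, v = w + 2 := ⟨v - 2, by omega⟩
      rw [hy w (by omega)]
      refine Finset.sum_congr rfl fun i _ => ?_
      congr 1
      rw [mul_comm]
      omega
  · rintro ⟨h1, h2, h3⟩
    have hx : ∀ u, u < p + 1 → mu (u + 1) = lam (u + 1) + R u := by
      intro u hu
      have := h1 (u + 1) (by omega) (by omega)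
      rw [Nat.add_sub_cancel, hrow u (u + 1) (by omega)] at this
      simpa using this
    have hy : ∀ v, v < k → nu (v + 2) = C v := by
      intro v hv
      rw [h3 (v + 2) (by omega) (by omega)]
      refine Finset.sum_congr rfl fun i _ => ?_
      congr 1
      rw [mul_comm]
      omega
    have h0 : ∑ j ∈ Finset.Ico 0 k, nu (j + 2) = ∑ i ∈ Finset.Ico 0 (p + 1), R i := by
      omega
    refine ⟨h0, ?_, ?_⟩
    · intro u hu1 hu2
      rw [hii u hu2, aux_conv, h0]
      congr 1
      exact Finset.sum_congr rfl fun i hi => hx i (Finset.mem_Ico.1 hi).2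
    · intro v hv1 hv2
      rw [hiii v (by omega), add_assoc, hl3 v (by omega), hw, h0, ← add_assoc]
      congr 1
      · congr 1
        exact Finset.sum_congr rfl fun i hi => by rw [hx i (Finset.mem_Ico.1 hi).2]
      · exact Finset.sum_congr rfl fun i hi => hy i (Finset.mem_Ico.1 hi).2
end

section
/- Let A be a d × K matrix with integer entries satisfying ker(A) ∩ ℝ^K_{≥0} = {0}, let c be its j-th column, and let A' be the matrix obtained from A by replacing its j-th column by a vector c' ∈ ℤ^d, where A' also satisfies ker(A') ∩ ℝ^K_{≥0} = {0}. If the number of x ∈ ℕ^K with A' x = c is at least the number of x ∈ ℕ^K with A x = c, then for every b ∈ ℤ^d with nonnegative entries, the number of x ∈ ℕ^K with A' x = b is at least the number of x ∈ ℕ^K with A x = b. -/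
theorem sol_finite_aux {d K : ℕ} (A : Matrix (Fin d) (Fin K) ℤ)
    (hk : ∀ x : Fin K → ℝ, (∀ k, 0 ≤ x k) →
      (A.map (Int.cast : ℤ → ℝ)).mulVec x = 0 → x = 0) (b : Fin d → ℤ) :
    {x : Fin K → ℕ | A.mulVec (fun k => (x k : ℤ)) = b}.Finite := by
  have hanti : IsAntichain (· ≤ ·) {x : Fin K → ℕ | A.mulVec (fun k => (x k : ℤ)) = b} := by
    intro x hx y hy hne hle
    apply hne
    have h := hk (fun k => (y k : ℝ) - x k)
      (fun k => sub_nonneg.2 (by exact_mod_cast hle k)) (by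
        ext i
        have h1 := congrFun (Set.mem_ofPred_eq ▸ hx) i
        have h2 := congrFun (Set.mem_ofPred_eq ▸ hy) i
        simp only [Matrix.mulVec, dotProduct, Matrix.map_apply, Pi.zero_apply] at h1 h2 ⊢
        have h3 : ∑ k, A i k * ((y k : ℤ) - x k) = 0 := by
          simp only [mul_sub, Finset.sum_sub_distrib]
          rw [h1, h2, sub_self]
        exact_mod_cast congrArg (Int.cast : ℤ → ℝ) h3)
    ext k
    have := congrFun h k
    simp only [Pi.zero_apply, sub_eq_zero] at this
    exact_mod_cast this.symm
  exact hanti.finite_of_partiallyWellOrderedOn (Set.isPWO_of_wellQuasiOrderedLE _)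

theorem updateCol_mulVec_aux {d K : ℕ} (A : Matrix (Fin d) (Fin K) ℤ)
    (j : Fin K) (c' : Fin d → ℤ) (x : Fin K → ℤ) (i : Fin d) :
    (A.updateCol j c').mulVec x i = A.mulVec x i + x j * (c' i - A i j) := by
  simp only [Matrix.mulVec, dotProduct]
  rw [← sub_eq_iff_eq_add', ← Finset.sum_sub_distrib, Finset.sum_eq_single j]
  · simp; ring
  · intro k _ hk
    simp [Matrix.updateCol_ne hk]
  · simp

/-- Proposition 6.1 (column-replacement monotonicity): let `A'` be obtained from `A` by
replacing its `j`-th column by `c'`, where both `A` and `A'` satisfy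
`ker ∩ ℝ^K_{≥0} = {0}`. If `p_{A'}(c) ≥ p_A(c)` for `c` the `j`-th column of `A`, then
`p_{A'}(b) ≥ p_A(b)` for every `b ∈ ℤ^d` with nonnegative entries. -/
theorem column_replacement_monotone (d K : ℕ) (A : Matrix (Fin d) (Fin K) ℤ)
    (j : Fin K) (c' : Fin d → ℤ)
    (hkerA : ∀ x : Fin K → ℝ, (∀ k, 0 ≤ x k) →
      (A.map (Int.cast : ℤ → ℝ)).mulVec x = 0 → x = 0)
    (hkerA' : ∀ x : Fin K → ℝ, (∀ k, 0 ≤ x k) →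
      ((A.updateCol j c').map (Int.cast : ℤ → ℝ)).mulVec x = 0 → x = 0)
    (hc : Nat.card {x : Fin K → ℕ // A.mulVec (fun k => (x k : ℤ)) = fun i => A i j} ≤
          Nat.card {x : Fin K → ℕ //
            (A.updateCol j c').mulVec (fun k => (x k : ℤ)) = fun i => A i j})
    (b : Fin d → ℤ) (hb : ∀ i, 0 ≤ b i) :
    Nat.card {x : Fin K → ℕ // A.mulVec (fun k => (x k : ℤ)) = b} ≤
      Nat.card {x : Fin K → ℕ //
        (A.updateCol j c').mulVec (fun k => (x k : ℤ)) = b} := by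
  classical
  set A' := A.updateCol j c' with hA'
  have fA := sol_finite_aux A hkerA
  have fA' := sol_finite_aux A' hkerA'
  have hy : ∃ y : Fin K → ℕ, A'.mulVec (fun k => (y k : ℤ)) = (fun i => A i j) ∧ y j ≠ 0 := by
    by_contra! hno
    refine absurd hc (not_le.2 ?_)
    refine Set.ncard_lt_ncard (s := {x : Fin K → ℕ | A'.mulVec (fun k => (x k : ℤ)) = fun i => A i j})
      (t := {x : Fin K → ℕ | A.mulVec (fun k => (x k : ℤ)) = fun i => A i j}) ?_ (fA _)
    refine (Set.ssubset_iff_of_subset ?_).2 ⟨Pi.single j 1, ?_, ?_⟩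
    · intro y hy
      have h0 := hno y hy
      ext i
      have := congrFun (Set.mem_ofPred_eq ▸ hy) i
      rw [hA', updateCol_mulVec_aux] at this
      simpa [h0] using this
    · ext i
      simp [Matrix.mulVec, dotProduct, Pi.single_apply]
    · intro h
      simpa using hno _ h
  obtain ⟨y, hy, hyj⟩ := hy
  have : Finite {x : Fin K → ℕ // A'.mulVec (fun k => (x k : ℤ)) = b} := fA' b
  refine Nat.card_le_card_of_injective (fun x => ⟨fun k => (if k = j then 0 else x.1 k) + x.1 j * y k, ?_⟩) ?_
  · ext i
    have h1 := congrFun x.2 i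
    have h2 := congrFun hy i
    rw [hA', updateCol_mulVec_aux] at h2 ⊢
    have h3 : A.mulVec (fun k => (((if k = j then 0 else x.1 k) + x.1 j * y k : ℕ) : ℤ)) i
        = A.mulVec (fun k => (x.1 k : ℤ)) i - A i j * x.1 j
          + x.1 j * A.mulVec (fun k => (y k : ℤ)) i := by
      simp only [Matrix.mulVec, dotProduct, Finset.mul_sum]
      have : A i j * (x.1 j : ℤ) = ∑ k, if k = j then A i k * (x.1 k : ℤ) else 0 := by simp
      rw [this, ← Finset.sum_sub_distrib, ← Finset.sum_add_distrib]
      refine Finset.sum_congr rfl fun k _ => ?_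
      split_ifs <;> push_cast <;> ring
    rw [h3, h1]
    simp only [if_true]
    push_cast
    linear_combination (x.1 j : ℤ) * h2
  · intro x z hxz
    have h := fun k => congrFun (congrArg Subtype.val hxz) k
    simp only at h
    have hj : x.1 j = z.1 j := by
      have := h j
      simp only [if_true, zero_add] at this
      exact Nat.eq_of_mul_eq_mul_right (Nat.pos_of_ne_zero hyj) this
    ext k
    by_cases hk : k = j
    · rw [hk, hj]
    · have := h k
      simp only [hk, if_false, hj] at this
      omega
end

section
/- Let A be a d × K matrix with nonnegative integer entries, every column of A nonzero, and with each standard basis vector e_1, …, e_d of ℕ^d appearing as a column of A. Let c be the j-th column of A, and suppose c_k > 0 for some index 1 ≤ k ≤ d. Let E be the matrix obtained from A by replacing its j-th column by the standard basis vector e_k. Then for every b ∈ ℕ^d, the number of x ∈ ℕ^K with E x = b is at least the number of x ∈ ℕ^K with A x = b. -/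
/-- Lemma 6.2: for a matrix `A` with nonnegative integer entries, all columns nonzero, and
every standard basis vector appearing as a column, replacing the `j`-th column of `A` by the
standard basis vector `e_k` supported at a nonzero coordinate `k` of that column can only
increase the vector partition function. -/
theorem column_to_basis_increases (d K : ℕ) (A : Matrix (Fin d) (Fin K) ℕ)
    (hbasis : ∀ i : Fin d, ∃ j : Fin K, (fun i' => A i' j) = Pi.single i 1)
    (hcol : ∀ j : Fin K, ∃ i : Fin d, A i j ≠ 0)
    (j : Fin K) (k : Fin d) (hk : 0 < A k j)
    (b : Fin d → ℕ) :
    Nat.card {x : Fin K → ℕ // A.mulVec x = b} ≤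
      Nat.card {x : Fin K → ℕ // (A.updateCol j (Pi.single k 1)).mulVec x = b} := by
  classical
  by_cases h : (fun i' => A i' j) = Pi.single k 1
  · have hE : A.updateCol j (Pi.single k 1) = A := by
      ext a l
      rw [Matrix.updateCol_apply]
      split_ifs with hl
      · subst hl
        exact (congrFun h a).symm
      · rfl
    rw [hE]
  choose s hs using hbasis
  have hsj : ∀ i, s i ≠ j := by
    intro i hi
    have h1 := hs i
    rw [hi] at h1
    have h2 := congrFun h1 k
    by_cases hik : k = i
    · subst hik
      exact h h1
    · simp [Pi.single_apply, hik] at h2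
      omega
  set E := A.updateCol j (Pi.single k 1) with hE
  have hEs : ∀ i a, E a (s i) = (Pi.single i 1 : Fin d → ℕ) a := by
    intro i a
    rw [hE, Matrix.updateCol_ne (hsj i)]
    exact congrFun (hs i) a
  let w : Fin d → ℕ := fun i => A i j - (Pi.single k 1 : Fin d → ℕ) i
  have hw : ∀ i, A i j = (Pi.single k 1 : Fin d → ℕ) i + w i := by
    intro i
    have : (Pi.single k 1 : Fin d → ℕ) i ≤ A i j := by
      by_cases hik : i = k
      · subst hik
        simpa using Nat.succ_le_of_lt hk
      · simp [Pi.single_apply, hik]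
    simp only [w]
    omega
  let v : Fin K → ℕ := ∑ i, w i • Pi.single (s i) 1
  have hvj : v j = 0 := by
    simp only [v, Finset.sum_apply, Pi.smul_apply]
    refine Finset.sum_eq_zero fun i _ => ?_
    simp [Pi.single_apply, (hsj i).symm]
  have hEv : E.mulVec v = w := by
    have : E.mulVec v = ∑ i, w i • E.mulVec (Pi.single (s i) 1) := by
      simp only [v]
      rw [← Matrix.mulVecLin_apply, map_sum]
      exact Finset.sum_congr rfl fun i _ => by
        rw [map_smul, Matrix.mulVecLin_apply]
    rw [this]
    ext a
    simp [Matrix.col, hEs, Pi.single_apply]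
  have hA : ∀ x : Fin K → ℕ, A.mulVec x = E.mulVec x + x j • w := by
    intro x
    ext a
    have : ∀ l, A a l * x l = E a l * x l + if l = j then x j * w a else 0 := by
      intro l
      by_cases hl : l = j
      · subst hl
        rw [hw a]
        simp [hE]
        ring
      · simp [hE, Matrix.updateCol_ne hl, hl]
    simp [Matrix.mulVec, dotProduct, this, Finset.sum_add_distrib]
  have hEcol : ∀ l, ∃ i, E i l ≠ 0 := by
    intro l
    by_cases hl : l = j
    · subst hl
      exact ⟨k, by simp [hE]⟩
    · obtain ⟨i, hi⟩ := hcol l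
      exact ⟨i, by rwa [hE, Matrix.updateCol_ne hl]⟩
  have hfin : Finite {x : Fin K → ℕ // E.mulVec x = b} := by
    refine Set.Finite.to_subtype (s := {x | E.mulVec x = b}) ?_
    refine (Set.finite_Iic (fun _ : Fin K => ∑ i, b i)).subset ?_
    intro x hx l
    obtain ⟨i, hi⟩ := hEcol l
    have hx' : E.mulVec x = b := hx
    calc x l ≤ E i l * x l := Nat.le_mul_of_pos_left _ (Nat.pos_of_ne_zero hi)
      _ ≤ ∑ l, E i l * x l :=
        Finset.single_le_sum (f := fun l => E i l * x l) (fun _ _ => Nat.zero_le _)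
          (Finset.mem_univ l)
      _ = b i := congrFun hx' i
      _ ≤ ∑ i, b i :=
        Finset.single_le_sum (f := b) (fun _ _ => Nat.zero_le _) (Finset.mem_univ i)
  refine Nat.card_le_card_of_injective
    (fun x => ⟨x.1 + x.1 j • v, by
      rw [Matrix.mulVec_add, Matrix.mulVec_smul, hEv, ← hA]
      exact x.2⟩) ?_
  rintro ⟨x, hx⟩ ⟨y, hy⟩ hxy
  have h1 : x + x j • v = y + y j • v := congrArg Subtype.val hxy
  have h2 : x j = y j := by simpa [hvj] using congrFun h1 j
  rw [h2] at h1
  exact Subtype.ext (add_right_cancel h1)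
end

section
/- Let A be a d × K matrix with nonnegative integer entries in which every standard basis vector e_1, …, e_d of ℕ^d appears as a column, and suppose f : {1,…,K} → {1,…,d} is a map such that A_{f(j), j} > 0 for every column index j (in particular f is surjective). For each 1 ≤ i ≤ d set m_i = #{j : f(j) = i}. Then for every b ∈ ℕ^d, the number of x ∈ ℕ^K with A x = b is at most Π_{i=1}^{d} C(b_i + m_i − 1, m_i − 1), where C(·,·) denotes a binomial coefficient. -/
open Finset

/-- The general binomial upper bound for vector partition functions (underlying Theorem 6.5):
if `A` has nonnegative integer entries, every standard basis vector appears as a column, and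
`f` chooses for each column `j` an index `f j` with `A (f j) j > 0`, then with
`m_i = #{j : f j = i}` we have `p_A(b) ≤ Π_i C(b_i + m_i - 1, m_i - 1)`. -/
theorem vpf_binomial_bound (d K : ℕ) (A : Matrix (Fin d) (Fin K) ℕ)
    (hbasis : ∀ i : Fin d, ∃ j : Fin K, (fun i' => A i' j) = Pi.single i 1)
    (f : Fin K → Fin d) (hf : ∀ j : Fin K, 0 < A (f j) j)
    (b : Fin d → ℕ) :
    Nat.card {x : Fin K → ℕ // A.mulVec x = b} ≤
      ∏ i : Fin d,
        Nat.choose (b i + (Finset.univ.filter fun j => f j = i).card - 1)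
          ((Finset.univ.filter fun j => f j = i).card - 1) := by
  classical
  choose c hc using hbasis
  have hA : ∀ i k, A i (c k) = if i = k then 1 else 0 := by
    intro i k
    have := congrFun (hc k) i
    simpa [Pi.single_apply] using this
  have hfc : ∀ i, f (c i) = i := by
    intro i
    have h := hf (c i)
    rw [hA] at h
    by_contra h'
    simp [h'] at h
  let S : Fin d → Finset (Fin K) := fun i => Finset.univ.filter fun j => f j = i
  have hcS : ∀ i, c i ∈ S i := fun i => by simp [S, hfc]
  let T := Fintype.piFinset (fun i => Finset.piAntidiag (S i) (b i))
  have hT : T.card = ∏ i : Fin d,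
        Nat.choose (b i + (S i).card - 1) ((S i).card - 1) := by
    simp only [T, Fintype.card_piFinset]
    refine Finset.prod_congr rfl fun i _ => ?_
    have hpos : 0 < (S i).card := Finset.card_pos.mpr ⟨_, hcS i⟩
    have h1 : (Finset.piAntidiag (S i) (b i)).card = (Finset.finsuppAntidiag (S i) (b i)).card := by
      simp [Finset.finsuppAntidiag]
    rw [h1, Finset.card_finsuppAntidiag_nat_eq_choose, Nat.add_comm (b i)]
    exact Nat.choose_symm_of_eq_add (by omega)
  have hle : ∀ x : Fin K → ℕ, A.mulVec x = b → ∀ i, ∑ j ∈ (S i).erase (c i), x j ≤ b i := by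
    intro x hx i
    rw [← congrFun hx i]
    simp only [Matrix.mulVec, dotProduct]
    calc ∑ j ∈ (S i).erase (c i), x j ≤ ∑ j ∈ (S i).erase (c i), A i j * x j := by
          refine Finset.sum_le_sum fun j hj => ?_
          have : f j = i := by simpa [S] using (Finset.mem_erase.mp hj).2
          have := hf j
          subst i
          exact Nat.le_mul_of_pos_left _ this
      _ ≤ _ := Finset.sum_le_sum_of_subset (Finset.subset_univ _)
  let g : (Fin K → ℕ) → Fin d → Fin K → ℕ := fun x i j =>
    if j = c i then b i - ∑ j' ∈ (S i).erase (c i), x j' else if f j = i then x j else 0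
  have hg : ∀ x, A.mulVec x = b → g x ∈ T := by
    intro x hx
    simp only [T, Fintype.mem_piFinset, Finset.mem_piAntidiag]
    intro i
    constructor
    · rw [← Finset.add_sum_erase _ _ (hcS i)]
      have : ∑ j ∈ (S i).erase (c i), g x i j = ∑ j ∈ (S i).erase (c i), x j := by
        refine Finset.sum_congr rfl fun j hj => ?_
        have h1 := Finset.mem_erase.mp hj
        have h2 : f j = i := by simpa [S] using h1.2
        simp [g, h1.1, h2]
      rw [this]
      have := hle x hx i
      simp only [g, if_true]
      omega
    · intro j hj
      by_contra h
      have h2 : f j ≠ i := by simpa [S] using h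
      have h1 : j ≠ c i := by rintro rfl; exact h (hcS i)
      simp [g, h1, h2] at hj
  change _ ≤ ∏ i : Fin d, Nat.choose (b i + (S i).card - 1) ((S i).card - 1)
  rw [← hT]
  have : Nat.card T = T.card := by simp
  rw [← this]
  refine Nat.card_le_card_of_injective
    (fun x : {x : Fin K → ℕ // A.mulVec x = b} => (⟨g x.1, hg x.1 x.2⟩ : T)) ?_
  rintro ⟨x, hx⟩ ⟨y, hy⟩ h
  have h : g x = g y := by simpa using h
  have hne : ∀ j, (∀ i, j ≠ c i) → x j = y j := by
    intro j hj
    have := congrFun (congrFun h (f j)) j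
    simpa [g, hj] using this
  have hci : ∀ i, x (c i) = y (c i) := by
    intro i
    have h1 := congrFun hx i
    rw [← congrFun hy i] at h1
    simp only [Matrix.mulVec, dotProduct] at h1
    rw [← Finset.add_sum_erase _ _ (Finset.mem_univ (c i)),
      ← Finset.add_sum_erase _ (fun j => A i j * y j) (Finset.mem_univ (c i))] at h1
    have h2 : ∑ j ∈ Finset.univ.erase (c i), A i j * x j
        = ∑ j ∈ Finset.univ.erase (c i), A i j * y j := by
      refine Finset.sum_congr rfl fun j hj => ?_
      by_cases hk : ∃ k, j = c k
      · obtain ⟨k, rfl⟩ := hk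
        have : i ≠ k := by rintro rfl; simp at hj
        simp [hA, this]
      · rw [hne j (by simpa using hk)]
    rw [h2] at h1
    simpa [hA] using h1
  apply Subtype.ext
  funext j
  by_cases hk : ∃ k, j = c k
  · obtain ⟨k, rfl⟩ := hk
    exact hci k
  · exact hne j (by simpa using hk)
end

section
/- For every b = (b_1, b_2, b_3) ∈ ℕ³, the number of vectors x ∈ ℕ^{11} with A^{2,3} x = b is at most C(b_1 + 5, 5) · C(b_2 + 3, 3), where C(·,·) denotes a binomial coefficient. -/
/-- The matrix `A^{2,3}` (over `ℕ`), whose columns are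
`(1,0,0), (0,1,0), (0,0,1), (1,0,1), (0,1,1), (0,1,1), (0,1,2), (1,1,1), (1,1,2), (1,2,2), (1,2,3)`. -/
def A23n : Matrix (Fin 3) (Fin 11) ℕ :=
  !![1, 0, 0, 1, 0, 0, 0, 1, 1, 1, 1;
     0, 1, 0, 0, 1, 1, 1, 1, 1, 2, 2;
     0, 0, 1, 1, 1, 1, 2, 1, 2, 2, 3]

theorem card_sum_eq_aux (k n : ℕ) :
    Nat.card {P : Fin (k + 1) → ℕ // ∑ i, P i = n} = (n + k).choose k := by
  rw [← Nat.card_congr (Sym.equivNatSumOfFintype (Fin (k + 1)) n), Nat.card_eq_fintype_card,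
    Sym.card_sym_eq_choose, Fintype.card_fin]
  have h : k + 1 + n - 1 = n + k := by omega
  rw [h, Nat.choose_symm_add]

theorem finite_sum_eq_aux (k n : ℕ) : Finite {P : Fin (k + 1) → ℕ // ∑ i, P i = n} :=
  Finite.of_equiv _ (Sym.equivNatSumOfFintype (Fin (k + 1)) n)

theorem mulVec_aux (b : Fin 3 → ℕ) (x : Fin 11 → ℕ) (h : A23n.mulVec x = b) :
    x 0 + x 3 + x 7 + x 8 + x 9 + x 10 = b 0 ∧
    x 1 + x 4 + x 5 + x 6 + x 7 + x 8 + 2 * x 9 + 2 * x 10 = b 1 ∧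
    x 2 + x 3 + x 4 + x 5 + 2 * x 6 + x 7 + 2 * x 8 + 2 * x 9 + 3 * x 10 = b 2 := by
  subst h
  simp [A23n, Matrix.mulVec, dotProduct, Fin.sum_univ_succ]
  refine ⟨?_, ?_, ?_⟩ <;> ring_nf <;> rfl

/-- Theorem 6.5 for `m = 2, n = 3`: `p_{A^{2,3}}(b) ≤ C(b₁+5, 5) · C(b₂+3, 3)`. -/
theorem vpf_23_binomial_bound (b : Fin 3 → ℕ) :
    Nat.card {x : Fin 11 → ℕ // A23n.mulVec x = b} ≤
      Nat.choose (b 0 + 5) 5 * Nat.choose (b 1 + 3) 3 := by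
  rw [← card_sum_eq_aux 5 (b 0), ← card_sum_eq_aux 3 (b 1), ← Nat.card_prod]
  haveI := finite_sum_eq_aux 5 (b 0)
  haveI := finite_sum_eq_aux 3 (b 1)
  refine Nat.card_le_card_of_injective
    (fun x => (⟨![x.1 0, x.1 3, x.1 7, x.1 8, x.1 9, x.1 10], ?_⟩,
      ⟨![x.1 1 + x.1 7 + x.1 8 + 2 * x.1 9 + 2 * x.1 10, x.1 4, x.1 5, x.1 6], ?_⟩)) ?_
  · have h := mulVec_aux b x.1 x.2
    simp [Fin.sum_univ_succ]
    omega
  · have h := mulVec_aux b x.1 x.2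
    simp [Fin.sum_univ_succ]
    omega
  · rintro ⟨x, hx⟩ ⟨y, hy⟩ hxy
    have h1 := mulVec_aux b x hx
    have h2 := mulVec_aux b y hy
    simp only [Prod.mk.injEq, Subtype.mk.injEq, Matrix.vecCons_inj] at hxy
    apply Subtype.ext
    funext i
    fin_cases i <;> simp <;> omega
end

section
/- For every b = (b_1, b_2, b_3, b_4) ∈ ℕ⁴, the number of vectors x ∈ ℕ^{21} with A^{2,4} x = b is at most C(b_1 + 8, 8) · C(b_2 + 8, 8) · (b_3 + 1), where C(·,·) denotes a binomial coefficient. -/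
/-- The matrix `A^{2,4}` (over `ℕ`). -/
def A24n : Matrix (Fin 4) (Fin 21) ℕ :=
  !![0, 0, 0, 1, 0, 0, 0, 1, 1, 0, 0, 0, 0, 0, 1, 0, 1, 1, 1, 1, 1;
     0, 0, 1, 0, 0, 1, 1, 0, 0, 1, 1, 1, 1, 1, 1, 1, 1, 1, 2, 2, 2;
     0, 1, 0, 0, 1, 0, 1, 1, 1, 1, 1, 1, 1, 2, 1, 2, 2, 2, 2, 3, 3;
     1, 0, 0, 0, 1, 1, 0, 0, 1, 1, 1, 1, 2, 1, 1, 2, 1, 2, 2, 2, 3]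

set_option maxHeartbeats 4000000 in
lemma A24_rows (x : Fin 21 → ℕ) (b : Fin 4 → ℕ) (h : A24n.mulVec x = b) :
    (x 3 + x 7 + x 8 + x 14 + x 16 + x 17 + x 18 + x 19 + x 20 = b 0) ∧
    (x 2 + x 5 + x 6 + x 9 + x 10 + x 11 + x 12 + x 13 + x 14 + x 15 + x 16 + x 17
      + 2 * x 18 + 2 * x 19 + 2 * x 20 = b 1) ∧
    (x 1 + x 4 + x 6 + x 7 + x 8 + x 9 + x 10 + x 11 + x 12 + 2 * x 13 + x 14 + 2 * x 15
      + 2 * x 16 + 2 * x 17 + 2 * x 18 + 3 * x 19 + 3 * x 20 = b 2) ∧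
    (x 0 + x 4 + x 5 + x 8 + x 9 + x 10 + x 11 + 2 * x 12 + x 13 + x 14 + 2 * x 15
      + x 16 + 2 * x 17 + 2 * x 18 + 2 * x 19 + 3 * x 20 = b 3) := by
  subst h
  refine ⟨?_, ?_, ?_, ?_⟩ <;>
    simp [Matrix.mulVec, dotProduct, A24n, Fin.sum_univ_succ] <;> ring

/-- first block of coordinates -/
def blockF (x : Fin 21 → ℕ) : Fin 9 → ℕ :=
  ![x 3, x 7, x 8, x 14, x 16, x 17, x 18, x 19, x 20]

/-- second block of coordinates, the first one padded so that the sum is constant -/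
def blockG (x : Fin 21 → ℕ) : Fin 9 → ℕ :=
  ![x 2 + (x 14 + x 16 + x 17 + 2 * x 18 + 2 * x 19 + 2 * x 20),
    x 5, x 6, x 9, x 10, x 11, x 12, x 13, x 15]

lemma card_sum9 (n : ℕ) :
    Nat.card {P : Fin 9 → ℕ // ∑ i, P i = n} = Nat.choose (n + 8) 8 := by
  rw [← Nat.card_congr (Sym.equivNatSumOfFintype (Fin 9) n), Nat.card_eq_fintype_card,
    Sym.card_sym_eq_choose, Fintype.card_fin, show 9 + n - 1 = n + 8 by omega]
  exact Nat.choose_symm_add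

set_option maxHeartbeats 2000000 in
/-- Theorem 6.5 for `m = 2, n = 4`: `p_{A^{2,4}}(b) ≤ C(b₁+8, 8) · C(b₂+8, 8) · (b₃+1)`. -/
theorem vpf_24_binomial_bound (b : Fin 4 → ℕ) :
    Nat.card {x : Fin 21 → ℕ // A24n.mulVec x = b} ≤
      Nat.choose (b 0 + 8) 8 * Nat.choose (b 1 + 8) 8 * (b 2 + 1) := by
  have hfin : ∀ n : ℕ, Finite {P : Fin 9 → ℕ // ∑ i, P i = n} := fun n =>
    Finite.of_equiv _ (Sym.equivNatSumOfFintype (Fin 9) n)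
  have := hfin (b 0)
  have := hfin (b 1)
  rw [← card_sum9, ← card_sum9, ← Nat.card_fin (b 2 + 1), ← Nat.card_prod, ← Nat.card_prod]
  refine Nat.card_le_card_of_injective
    (fun x => ((⟨blockF x.1, ?_⟩, ⟨blockG x.1, ?_⟩), ⟨x.1 1, ?_⟩)) ?_
  · have h := A24_rows x.1 b x.2
    simp [blockF, Fin.sum_univ_succ]
    omega
  · have h := A24_rows x.1 b x.2
    simp [blockG, Fin.sum_univ_succ]
    omega
  · have h := A24_rows x.1 b x.2
    omega
  · rintro ⟨x, hx⟩ ⟨y, hy⟩ hxy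
    have h1 := A24_rows x b hx
    have h2 := A24_rows y b hy
    simp only [Prod.mk.injEq, Subtype.mk.injEq, Fin.mk.injEq] at hxy
    obtain ⟨⟨hF, hG⟩, hz⟩ := hxy
    have f := fun i => congrFun hF i
    have g := fun i => congrFun hG i
    have e3 : x 3 = y 3 := f 0
    have e7 : x 7 = y 7 := f 1
    have e8 : x 8 = y 8 := f 2
    have e14 : x 14 = y 14 := f 3
    have e16 : x 16 = y 16 := f 4
    have e17 : x 17 = y 17 := f 5
    have e18 : x 18 = y 18 := f 6
    have e19 : x 19 = y 19 := f 7
    have e20 : x 20 = y 20 := f 8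
    have e5 : x 5 = y 5 := g 1
    have e6 : x 6 = y 6 := g 2
    have e9 : x 9 = y 9 := g 3
    have e10 : x 10 = y 10 := g 4
    have e11 : x 11 = y 11 := g 5
    have e12 : x 12 = y 12 := g 6
    have e13 : x 13 = y 13 := g 7
    have e15 : x 15 = y 15 := g 8
    obtain ⟨-, p1, p2, p3⟩ := h1
    obtain ⟨-, q1, q2, q3⟩ := h2
    have e2 : x 2 = y 2 := by clear p2 p3 q2 q3; omega
    have e4 : x 4 = y 4 := by clear p1 p3 q1 q3; omega
    have e0 : x 0 = y 0 := by clear p1 p2 q1 q2; omega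
    apply Subtype.ext
    funext i
    fin_cases i
    exacts [e0, hz, e2, e3, e4, e5, e6, e7, e8, e9, e10, e11, e12, e13, e14, e15, e16, e17,
      e18, e19, e20]
end

section
/- Let λ, μ, ν be partitions of the same positive integer N with at most 8, 2, 4 parts respectively (padded with zeros), and let b ∈ ℤ⁴ be the vector b = (ν_2 + ν_3 + ν_4 − λ_3 − λ_4 − λ_5 − λ_6 − λ_7 − λ_8, μ_2 + ν_2 + ν_3 + ν_4 − λ_2 − λ_3 − λ_4 − λ_5 − 2λ_6 − 2λ_7 − 2λ_8, μ_2 + ν_2 + 2ν_3 + 2ν_4 − λ_2 − λ_3 − 2λ_4 − 2λ_5 − 2λ_6 − 3λ_7 − 3λ_8, μ_2 + ν_2 + ν_3 + 2ν_4 − λ_2 − λ_3 − λ_4 − 2λ_5 − 2λ_6 − 2λ_7 − 3λ_8). Then the number of vectors x ∈ ℕ^{21} with A^{2,4} x = b (i.e., the atomic Kronecker coefficient g̃^{2,4}_{λ,μ,ν}) is at most C(N + 8, 8) · C(2N + 8, 8) · (3N + 1), where C(·,·) denotes a binomial coefficient. -/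
/-- The matrix `A^{2,4}` (over `ℤ`). -/
def A24 : Matrix (Fin 4) (Fin 21) ℤ :=
  !![0, 0, 0, 1, 0, 0, 0, 1, 1, 0, 0, 0, 0, 0, 1, 0, 1, 1, 1, 1, 1;
     0, 0, 1, 0, 0, 1, 1, 0, 0, 1, 1, 1, 1, 1, 1, 1, 1, 1, 2, 2, 2;
     0, 1, 0, 0, 1, 0, 1, 1, 1, 1, 1, 1, 1, 2, 1, 2, 2, 2, 2, 3, 3;
     1, 0, 0, 0, 1, 1, 0, 0, 1, 1, 1, 1, 2, 1, 1, 2, 1, 2, 2, 2, 3]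

theorem card_tuples (n : ℕ) :
    (Finset.piAntidiag (Finset.univ : Finset (Fin 9)) n).card = Nat.choose (n + 8) 8 := by
  have h1 : (Finset.piAntidiag (Finset.univ : Finset (Fin 9)) n).card
      = (Finset.finsuppAntidiag (Finset.univ : Finset (Fin 9)) n).card := by
    simp [Finset.finsuppAntidiag]
  rw [h1, Finset.card_finsuppAntidiag_nat_eq_choose]
  have h : 9 + n - 1 = n + 8 := by omega
  have := Nat.choose_symm_of_eq_add (n := n + 8) (a := n) (b := 8) rfl
  simpa [h] using this

set_option maxHeartbeats 4000000 in
/-- Corollary 6.7 for `m = 2, n = 4`: for partitions `λ, μ, ν` of `N` with at most `8, 2, 4`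
parts, the atomic Kronecker coefficient `g̃^{2,4}_{λ,μ,ν} = p_{A^{2,4}}(b(λ,μ,ν))` is at most
`C(N+8, 8) · C(2N+8, 8) · (3N+1)`. -/
theorem atomic_24_size_bound (N : ℕ) (hN : 0 < N)
    (l1 l2 l3 l4 l5 l6 l7 l8 m1 m2 n1 n2 n3 n4 : ℕ)
    (hl12 : l2 ≤ l1) (hl23 : l3 ≤ l2) (hl34 : l4 ≤ l3) (hl45 : l5 ≤ l4)
    (hl56 : l6 ≤ l5) (hl67 : l7 ≤ l6) (hl78 : l8 ≤ l7)
    (hm12 : m2 ≤ m1) (hn12 : n2 ≤ n1) (hn23 : n3 ≤ n2) (hn34 : n4 ≤ n3)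
    (hlN : l1 + l2 + l3 + l4 + l5 + l6 + l7 + l8 = N)
    (hmN : m1 + m2 = N)
    (hnN : n1 + n2 + n3 + n4 = N) :
    Nat.card {x : Fin 21 → ℕ //
      A24.mulVec (fun j => (x j : ℤ)) =
        ![(n2 : ℤ) + n3 + n4 - l3 - l4 - l5 - l6 - l7 - l8,
          (m2 : ℤ) + n2 + n3 + n4 - l2 - l3 - l4 - l5 - 2 * l6 - 2 * l7 - 2 * l8,
          (m2 : ℤ) + n2 + 2 * n3 + 2 * n4 - l2 - l3 - 2 * l4 - 2 * l5 - 2 * l6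
            - 3 * l7 - 3 * l8,
          (m2 : ℤ) + n2 + n3 + 2 * n4 - l2 - l3 - l4 - 2 * l5 - 2 * l6 - 2 * l7
            - 3 * l8]} ≤
      Nat.choose (N + 8) 8 * Nat.choose (2 * N + 8) 8 * (3 * N + 1) := by
  set S := {x : Fin 21 → ℕ // _} with hS
  have key : ∀ x : S,
      ((x.1 3 + x.1 7 + x.1 8 + x.1 14 + x.1 16 + x.1 17 + x.1 18 + x.1 19 + x.1 20 : ℕ) : ℤ)
        = (n2 : ℤ) + n3 + n4 - l3 - l4 - l5 - l6 - l7 - l8 ∧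
      ((x.1 2 + x.1 5 + x.1 6 + x.1 9 + x.1 10 + x.1 11 + x.1 12 + x.1 13 + x.1 15
        + (x.1 14 + x.1 16 + x.1 17 + 2 * x.1 18 + 2 * x.1 19 + 2 * x.1 20) : ℕ) : ℤ)
        = (m2 : ℤ) + n2 + n3 + n4 - l2 - l3 - l4 - l5 - 2 * l6 - 2 * l7 - 2 * l8 ∧
      ((x.1 1 + x.1 4 + (x.1 6 + x.1 7 + x.1 8 + x.1 9 + x.1 10 + x.1 11 + x.1 12 + 2 * x.1 13
        + x.1 14 + 2 * x.1 15 + 2 * x.1 16 + 2 * x.1 17 + 2 * x.1 18 + 3 * x.1 19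
        + 3 * x.1 20) : ℕ) : ℤ)
        = (m2 : ℤ) + n2 + 2 * n3 + 2 * n4 - l2 - l3 - 2 * l4 - 2 * l5 - 2 * l6
            - 3 * l7 - 3 * l8 ∧
      ((x.1 0 + x.1 4 + (x.1 5 + x.1 8 + x.1 9 + x.1 10 + x.1 11 + 2 * x.1 12 + x.1 13
        + x.1 14 + 2 * x.1 15 + x.1 16 + 2 * x.1 17 + 2 * x.1 18 + 2 * x.1 19
        + 3 * x.1 20) : ℕ) : ℤ)
        = (m2 : ℤ) + n2 + n3 + 2 * n4 - l2 - l3 - l4 - 2 * l5 - 2 * l6 - 2 * l7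
            - 3 * l8 := by
    rintro ⟨x, hx⟩
    have h0 := congrFun hx 0
    have h1 := congrFun hx 1
    have h2 := congrFun hx 2
    have h3 := congrFun hx 3
    simp [A24, Matrix.mulVec, dotProduct, Fin.sum_univ_succ] at h0 h1 h2 h3

    push_cast
    refine ⟨?_, ?_, ?_, ?_⟩ <;> linarith
  let F : (Fin 21 → ℕ) → (Fin 9 → ℕ) × (Fin 9 → ℕ) × ℕ := fun x =>
    (![N - (x 7 + x 8 + x 14 + x 16 + x 17 + x 18 + x 19 + x 20), x 7, x 8, x 14, x 16, x 17, x 18, x 19, x 20],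
     ![2 * N - (x 5 + x 6 + x 9 + x 10 + x 11 + x 12 + x 13 + x 15), x 5, x 6, x 9, x 10, x 11, x 12, x 13, x 15],
     x 4)
  let T := (Finset.piAntidiag (Finset.univ : Finset (Fin 9)) N) ×ˢ
    ((Finset.piAntidiag (Finset.univ : Finset (Fin 9)) (2 * N)) ×ˢ Finset.range (3 * N + 1))
  have hT : T.card = Nat.choose (N + 8) 8 * Nat.choose (2 * N + 8) 8 * (3 * N + 1) := by
    simp only [T, Finset.card_product, card_tuples, Finset.card_range]
    ring
  have hF : ∀ x : S, F x.1 ∈ T := by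
    intro x
    obtain ⟨h0, h1, h2, h3⟩ := key x
    simp only [T, F, Finset.mem_product, Finset.mem_piAntidiag, Finset.mem_range]
    refine ⟨⟨?_, by simp⟩, ⟨?_, by simp⟩, by omega⟩
    · simp [Fin.sum_univ_succ]
      omega
    · simp [Fin.sum_univ_succ]
      omega
  have hcard : Nat.card T = T.card := by simp
  rw [← hT, ← hcard]
  refine Nat.card_le_card_of_injective (fun x : S => (⟨F x.1, hF x⟩ : T)) ?_
  intro x y hxy
  have hxy' : F x.1 = F y.1 := congrArg Subtype.val hxy
  obtain ⟨h0, h1, h2, h3⟩ := key x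
  obtain ⟨k0, k1, k2, k3⟩ := key y
  simp only [F, Prod.mk.injEq] at hxy'
  obtain ⟨ha, hb, hc⟩ := hxy'
  have e7 : x.1 7 = y.1 7 := congrFun ha 1
  have e8 : x.1 8 = y.1 8 := congrFun ha 2
  have e14 : x.1 14 = y.1 14 := congrFun ha 3
  have e16 : x.1 16 = y.1 16 := congrFun ha 4
  have e17 : x.1 17 = y.1 17 := congrFun ha 5
  have e18 : x.1 18 = y.1 18 := congrFun ha 6
  have e19 : x.1 19 = y.1 19 := congrFun ha 7
  have e20 : x.1 20 = y.1 20 := congrFun ha 8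
  have e5 : x.1 5 = y.1 5 := congrFun hb 1
  have e6 : x.1 6 = y.1 6 := congrFun hb 2
  have e9 : x.1 9 = y.1 9 := congrFun hb 3
  have e10 : x.1 10 = y.1 10 := congrFun hb 4
  have e11 : x.1 11 = y.1 11 := congrFun hb 5
  have e12 : x.1 12 = y.1 12 := congrFun hb 6
  have e13 : x.1 13 = y.1 13 := congrFun hb 7
  have e15 : x.1 15 = y.1 15 := congrFun hb 8
  have g0 := Int.ofNat.inj (h0.trans k0.symm)
  have g1 := Int.ofNat.inj (h1.trans k1.symm)
  have g2 := Int.ofNat.inj (h2.trans k2.symm)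
  have g3 := Int.ofNat.inj (h3.trans k3.symm)
  clear ha hb hxy hF h0 h1 h2 h3 k0 k1 k2 k3
  simp only [e7, e8, e14, e16, e17, e18, e19, e20, e5, e6, e9, e10, e11, e12, e13, e15, hc,
    add_left_inj] at g0 g1 g2 g3
  apply Subtype.ext
  funext j
  fin_cases j <;> assumption
end
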